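/- arXiv:0706.1701 — 2 statements merged into one kernel-verified Lean document; each statement's English description precedes it below -/
import Mathlib

section
/- Let R ⊆ S^r be a finite r-ary relation on a finite set S, and ε > 0. If for all subsets S₁,…,S_r ⊆ S we have |R(S₁,…,S_r) − |R|·∏|Sᵢ|/|S|^r| < ε|R|, then for all functions f₁,…,f_r : S → [0,1], not all identically zero, we have |R(f₁,…,f_r) − |R|·∏|fᵢ|₁/|S|^r| < ε|R|, where R(f₁,…,f_r) = Σ_{(x₁,…,x_r)∈R} ∏ᵢ fᵢ(xᵢ) and |f|₁ = Σ_{x∈S} |f(x)|. -/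
open Finset

attribute [local instance] Classical.propDecidable

/-- `R(S₁,…,S_r)`: the number of tuples of `R` whose `i`-th coordinate lies in `T i`. -/
noncomputable def relCount {S : Type*} {r : ℕ} (R : Finset (Fin r → S))
    (T : Fin r → Finset S) : ℝ :=
  ((R.filter fun t => ∀ i, t i ∈ T i).card : ℝ)

/-- `R(f₁,…,f_r) = Σ_{(x₁,…,x_r)∈R} ∏ᵢ fᵢ(xᵢ)`. -/
noncomputable def relApply {S : Type*} {r : ℕ} (R : Finset (Fin r → S))
    (f : Fin r → S → ℝ) : ℝ :=
  ∑ t ∈ R, ∏ i, f i (t i)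

/-- `R` is an ε-expander relation. -/
def IsExpanderRel {S : Type*} [Fintype S] {r : ℕ} (ε : ℝ) (R : Finset (Fin r → S)) : Prop :=
  ∀ T : Fin r → Finset S,
    |relCount R T - (R.card : ℝ) * (∏ i, ((T i).card : ℝ)) / (Fintype.card S : ℝ) ^ r|
      < ε * R.card

noncomputable def relML {S : Type*} [Fintype S] {r : ℕ} (R : Finset (Fin r → S)) (c : ℝ) :
    MultilinearMap ℝ (fun _ : Fin r => S → ℝ) ℝ :=
  (∑ t ∈ R, (MultilinearMap.mkPiAlgebra ℝ (Fin r) ℝ).compLinearMap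
    (fun i => (LinearMap.proj (t i) : (S → ℝ) →ₗ[ℝ] ℝ))) -
  c • (MultilinearMap.mkPiAlgebra ℝ (Fin r) ℝ).compLinearMap
    (fun _ => (∑ x, LinearMap.proj x : (S → ℝ) →ₗ[ℝ] ℝ))

theorem relML_apply {S : Type*} [Fintype S] {r : ℕ} (R : Finset (Fin r → S)) (c : ℝ)
    (f : Fin r → S → ℝ) :
    relML R c f = relApply R f - c * ∏ i, ∑ x, f i x := by
  simp [relML, relApply, MultilinearMap.sum_apply]

theorem ml_cube {S : Type*} [Fintype S] {r : ℕ}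
    (M : MultilinearMap ℝ (fun _ : Fin r => S → ℝ) ℝ) (b : ℝ)
    (h : ∀ f : Fin r → S → ℝ, (∀ i x, f i x = 0 ∨ f i x = 1) → |M f| < b)
    (s : Finset (Fin r)) : ∀ f : Fin r → S → ℝ,
      (∀ i x, 0 ≤ f i x ∧ f i x ≤ 1) → (∀ i, i ∉ s → ∀ x, f i x = 0 ∨ f i x = 1) →
      |M f| < b := by
  induction s using Finset.induction_on with
  | empty => intro f _ hf; exact h f fun i x => hf i (by simp) x
  | insert a s ha ih =>
    intro f hf hs
    have hc : Convex ℝ {g : S → ℝ | |M (Function.update f a g)| < b} := by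
      intro g hg k hk p q hp hq hpq
      simp only [Set.mem_setOf_eq, MultilinearMap.map_update_add,
        MultilinearMap.map_update_smul, smul_eq_mul] at *
      have := (convex_Ioo (-b) b) (abs_lt.1 hg) (abs_lt.1 hk) hp hq hpq
      exact abs_lt.2 (by simpa using this)
    have hsub : Set.pi Set.univ (fun _ : S => ({0, 1} : Set ℝ)) ⊆
        {g : S → ℝ | |M (Function.update f a g)| < b} := by
      intro g hg
      have hg' : ∀ x, g x = 0 ∨ g x = 1 := fun x => by simpa using hg x (Set.mem_univ x)
      apply ih
      · intro i x
        by_cases hi : i = a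
        · subst hi
          rcases hg' x with h | h <;> simp [h]
        · simpa [hi] using hf i x
      · intro i his x
        by_cases hi : i = a
        · subst hi
          simpa using hg' x
        · simpa [hi] using hs i (by simp [hi, his]) x
    have hmem : f a ∈ convexHull ℝ (Set.pi Set.univ (fun _ : S => ({0, 1} : Set ℝ))) := by
      rw [convexHull_pi]
      intro x _
      rw [convexHull_pair, segment_eq_Icc zero_le_one]
      exact hf a x
    have := convexHull_min hsub hc hmem
    simpa using this

/-- If `R ⊆ S^r` is an ε-expander relation (the set inequality holds for all subsets),
then the corresponding inequality holds for all `[0,1]`-valued functions, not all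
identically zero. -/
theorem expanderRel_functional_bound
    {S : Type*} [Fintype S] {r : ℕ} (R : Finset (Fin r → S)) (ε : ℝ)
    (hR : IsExpanderRel ε R)
    (f : Fin r → S → ℝ) (hf0 : ∀ i x, 0 ≤ f i x) (hf1 : ∀ i x, f i x ≤ 1)
    (hne : ¬ ∀ i x, f i x = 0) :
    |relApply R f - (R.card : ℝ) * (∏ i, ∑ x, |f i x|) / (Fintype.card S : ℝ) ^ r|
      < ε * R.card := by
  have key : ∀ g : Fin r → S → ℝ,
      relML R ((R.card : ℝ) / (Fintype.card S : ℝ) ^ r) g =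
      relApply R g - (R.card : ℝ) * (∏ i, ∑ x, g i x) / (Fintype.card S : ℝ) ^ r := by
    intro g
    rw [relML_apply]; ring
  have e : ∀ i x, |f i x| = f i x := fun i x => abs_of_nonneg (hf0 i x)
  simp only [e]
  rw [← key]
  refine ml_cube _ _ ?_ Finset.univ f (fun i x => ⟨hf0 i x, hf1 i x⟩) (by simp)
  intro g hg
  rw [key]
  have hT := hR (fun i => Finset.univ.filter fun x => g i x = 1)
  have hg' : ∀ i x, g i x = if g i x = 1 then 1 else 0 := by
    intro i x
    rcases hg i x with h | h <;> simp [h]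
  have h1 : relApply R g = relCount R (fun i => Finset.univ.filter fun x => g i x = 1) := by
    unfold relApply relCount
    rw [Finset.card_filter]
    push_cast
    refine Finset.sum_congr rfl fun t _ => ?_
    rw [Finset.prod_congr rfl fun i _ => hg' i (t i), Finset.prod_ite_zero]
    simp
  have h2 : ∀ i, ∑ x, g i x = ((Finset.univ.filter fun x => g i x = 1).card : ℝ) := by
    intro i
    rw [Finset.sum_congr rfl fun x _ => hg' i x]
    simp
  rw [h1]
  simp only [h2]
  exact hT
end

section
/- Let τ be a finite relational type with all relation symbols at most r-ary, let k be a positive integer and ε > 0. Then there is Δ > 0 such that for every sufficiently large n there exists a relational structure A of type τ on n elements with girth at least k, maximal degree at most Δ, in which every relation of arity at least 2 is an ε-expander relation. -/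
open Finset

attribute [local instance] Classical.propDecidable

/-- A twisted product of relational structures `(A, RA)` and `(B, RB)` of type `ar : ι → ℕ`:
a family of relations `RC` on `A × B`, together with, for each symbol `i` and each tuple
`t ∈ RB i`, bijections `α i t j : A → π_B⁻¹(t j)` (injective maps into the fiber over `t j`)
such that `x ∈ RA i ↔ (α i t · (x ·)) ∈ RC i`, the second projection is a homomorphism, and
every tuple of `RC i` arises as such an image. -/
structure TwistedProduct {ι A B : Type*} (ar : ι → ℕ)
    (RA : ∀ i, Finset (Fin (ar i) → A))
    (RB : ∀ i, Finset (Fin (ar i) → B))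
    (RC : ∀ i, Finset (Fin (ar i) → A × B)) where
  α : ∀ i, (Fin (ar i) → B) → Fin (ar i) → A → A × B
  α_inj : ∀ i t, t ∈ RB i → ∀ j, Function.Injective (α i t j)
  α_snd : ∀ i t, t ∈ RB i → ∀ j x, (α i t j x).2 = t j
  mem_iff : ∀ i t, t ∈ RB i → ∀ x : Fin (ar i) → A,
    x ∈ RA i ↔ (fun j => α i t j (x j)) ∈ RC i
  proj_mem : ∀ i, ∀ u ∈ RC i, (fun j => (u j).2) ∈ RB i
  exists_preimage : ∀ i, ∀ u ∈ RC i,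
    ∃ x ∈ RA i, ∀ j, α i (fun j' => (u j').2) j (x j) = u j

/-- The degree of an element: the number of relational tuples containing it,
with multiplicity. -/
noncomputable def degree {ι X : Type*} [Fintype ι] (ar : ι → ℕ)
    (R : ∀ i, Finset (Fin (ar i) → X)) (x : X) : ℕ :=
  ∑ i, ∑ t ∈ R i, (Finset.univ.filter fun j => t j = x).card

/-- The maximal degree `Δ` of a relational structure. -/
noncomputable def maxDegree {ι X : Type*} [Fintype ι] [Fintype X] (ar : ι → ℕ)
    (R : ∀ i, Finset (Fin (ar i) → X)) : ℕ :=
  Finset.univ.sup (degree ar R)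

/-- `f` is a homomorphism of relational structures. -/
def IsHom {ι X Y : Type*} (ar : ι → ℕ) (RX : ∀ i, Finset (Fin (ar i) → X))
    (RY : ∀ i, Finset (Fin (ar i) → Y)) (f : X → Y) : Prop :=
  ∀ i, ∀ t ∈ RX i, (fun j => f (t j)) ∈ RY i

/-- Cycle data of length `m ≥ 2` in a relational structure: distinct points `x p` and
distinct relational tuples `s p` such that each tuple `s p` contains both `x p` and the
cyclically next point `x (p+1)`. -/
def IsRelCycleData {ι X : Type*} (ar : ι → ℕ) (R : ∀ i, Finset (Fin (ar i) → X)) (m : ℕ)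
    (x : Fin m → X) (s : Fin m → Σ i, Fin (ar i) → X) : Prop :=
  2 ≤ m ∧ Function.Injective x ∧ Function.Injective s ∧
  (∀ p, (s p).2 ∈ R (s p).1) ∧
  (∀ p, ∃ j, (s p).2 j = x p) ∧
  (∀ p : Fin m, ∃ j, (s p).2 j =
    x ⟨((p : ℕ) + 1) % m, Nat.mod_lt _ ((Nat.zero_le _).trans_lt p.isLt)⟩)

/-- The structure has a cycle of length `m`: either the degenerate case `m = 1` (a tuple
with a repeated coordinate) or cycle data of length `m ≥ 2`. -/
def HasRelCycle {ι X : Type*} (ar : ι → ℕ) (R : ∀ i, Finset (Fin (ar i) → X)) (m : ℕ) :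
    Prop :=
  (m = 1 ∧ ∃ i, ∃ t ∈ R i, ∃ j j' : Fin (ar i), j ≠ j' ∧ t j = t j') ∨
  (∃ x s, IsRelCycleData ar R m x s)


lemma aux_step {X K : Type*} [DecidableEq X] [Fintype X] [Fintype K] [Nonempty X]
    (f : K → X → ℝ) (hf : ∀ κ t, |f κ t| ≤ 1) (hs : ∀ κ, ∑ t, f κ t = 0)
    (w : K → ℝ) (hw : ∀ κ, 0 ≤ w κ) (A : Finset X) (δ l : ℝ) (hl : 0 < l) (hl1 : l ≤ 1)
    (hδ1 : δ ≤ 1 / 2)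
    (hA : ((Aᶜ).card : ℝ) ≤ δ * Fintype.card X) :
    ∃ t ∈ A, ∑ κ, w κ * Real.exp (l * f κ t) ≤ (1 + l ^ 2 + 2 * δ * l) * ∑ κ, w κ := by
  have hX : (0 : ℝ) < Fintype.card X := by exact_mod_cast Fintype.card_pos
  have hcard : ((Aᶜ).card : ℝ) + A.card = Fintype.card X := by
    have := Finset.card_add_card_compl A
    have h2 : ((A.card + (Aᶜ).card : ℕ) : ℝ) = Fintype.card X := by exact_mod_cast this
    push_cast at h2; linarith
  have hδ0 : 0 ≤ δ := by
    by_contra h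
    have : (0 : ℝ) ≤ (Aᶜ).card := by positivity
    nlinarith
  have hApos : (0 : ℝ) < A.card := by nlinarith
  have hAne : A.Nonempty := by
    rw [← Finset.card_pos]; exact_mod_cast hApos
  have hcomp : ((Aᶜ).card : ℝ) ≤ 2 * δ * A.card := by nlinarith
  have key : ∀ κ, ∑ t ∈ A, Real.exp (l * f κ t) ≤ A.card * (1 + l ^ 2 + 2 * δ * l) := by
    intro κ
    have h1 : ∀ t ∈ A, Real.exp (l * f κ t) ≤ (1 + l ^ 2) + l * f κ t := by
      intro t _
      have habs : |l * f κ t| ≤ l := by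
        rw [abs_mul, abs_of_pos hl]
        have := hf κ t
        nlinarith
      have h := Real.abs_exp_sub_one_sub_id_le (habs.trans hl1)
      have h' := (abs_le.1 h).2
      have h3 : (l * f κ t) ^ 2 ≤ l ^ 2 := sq_le_sq' (by linarith [(abs_le.1 habs).1]) (abs_le.1 habs).2
      linarith
    refine (Finset.sum_le_sum h1).trans ?_
    rw [Finset.sum_add_distrib, Finset.sum_const, nsmul_eq_mul, ← Finset.mul_sum]
    have h2 : ∑ t ∈ A, f κ t ≤ 2 * δ * A.card := by
      have h3 := Finset.sum_add_sum_compl A (f κ)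
      rw [hs] at h3
      have h4 : -(∑ t ∈ Aᶜ, f κ t) ≤ (Aᶜ).card := by
        rw [← Finset.sum_neg_distrib]
        have : ∑ t ∈ Aᶜ, -f κ t ≤ ∑ t ∈ Aᶜ, (1 : ℝ) :=
          Finset.sum_le_sum fun t _ => by linarith [(abs_le.1 (hf κ t)).1]
        simpa using this
      linarith
    nlinarith
  apply Finset.exists_le_of_sum_le hAne
  rw [Finset.sum_comm, Finset.sum_const, nsmul_eq_mul]
  calc ∑ κ, ∑ t ∈ A, w κ * Real.exp (l * f κ t)
      ≤ ∑ κ, w κ * (A.card * (1 + l ^ 2 + 2 * δ * l)) := by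
        refine Finset.sum_le_sum fun κ _ => ?_
        rw [← Finset.mul_sum]
        exact mul_le_mul_of_nonneg_left (key κ) (hw κ)
    _ = _ := by rw [← Finset.sum_mul]; ring

lemma aux_fiber {V : Type*} [Fintype V] {a : ℕ} (j : Fin a) (P : (Fin a → V) → Prop)
    [DecidablePred P] (b : ℕ)
    (hP : ∀ t, (univ.filter fun y => P (Function.update t j y)).card ≤ b) :
    Fintype.card V * (univ.filter P).card ≤ b * Fintype.card V ^ a := by
  have h1 : (univ.filter fun p : (Fin a → V) × V => P (Function.update p.1 j p.2)).card
      = (univ.filter fun p : (Fin a → V) × V => P p.1).card := by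
    refine Finset.card_bij' (fun p _ => (Function.update p.1 j p.2, p.1 j))
      (fun p _ => (Function.update p.1 j p.2, p.1 j)) ?_ ?_ ?_ ?_
    · intro p hp; simpa using hp
    · intro p hp; simpa using hp
    · intro p hp; simp
    · intro p hp; simp
  have h2 : (univ.filter fun p : (Fin a → V) × V => P p.1).card
      = (univ.filter P).card * Fintype.card V := by
    rw [← Finset.card_univ, ← Finset.card_product]
    congr 1; ext p; simp
  have h3 : (univ.filter fun p : (Fin a → V) × V => P (Function.update p.1 j p.2)).card
      = ∑ t : Fin a → V, (univ.filter fun y => P (Function.update t j y)).card := by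
    simp only [Finset.card_filter]
    rw [Fintype.sum_prod_type]
  rw [mul_comm, ← h2, ← h1, h3]
  refine (Finset.sum_le_sum fun t _ => hP t).trans ?_
  simp [mul_comm]

noncomputable def auxNbr {ι V : Type*} [Fintype ι] (ar : ι → ℕ)
    (R : ∀ i, Finset (Fin (ar i) → V)) (x : V) : Finset V :=
  insert x (univ.biUnion fun i => ((R i).filter fun t => ∃ j, t j = x).biUnion
    fun t => univ.image t)

noncomputable def auxBall {ι V : Type*} [Fintype ι] (ar : ι → ℕ)
    (R : ∀ i, Finset (Fin (ar i) → V)) (x : V) : ℕ → Finset V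
  | 0 => {x}
  | l + 1 => (auxBall ar R x l).biUnion (auxNbr ar R)

lemma auxNbr_card {ι V : Type*} [Fintype ι] (ar : ι → ℕ) (r Δ : ℕ) (har : ∀ i, ar i ≤ r)
    (R : ∀ i, Finset (Fin (ar i) → V)) (x : V) (hd : degree ar R x ≤ Δ) :
    (auxNbr ar R x).card ≤ 1 + r * Δ := by
  unfold auxNbr
  refine (Finset.card_insert_le _ _).trans ?_
  rw [add_comm]
  refine Nat.add_le_add_left (le_trans ?_ (Nat.mul_le_mul_left r hd)) 1
  refine Finset.card_biUnion_le.trans ?_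
  unfold degree
  rw [Finset.mul_sum]
  refine Finset.sum_le_sum fun i _ => Finset.card_biUnion_le.trans ?_
  rw [Finset.mul_sum, Finset.sum_filter]
  refine Finset.sum_le_sum fun t _ => ?_
  split_ifs with h
  · obtain ⟨j, hj⟩ := h
    have h1 : 1 ≤ (univ.filter fun j => t j = x).card :=
      Finset.card_pos.2 ⟨j, by simpa using hj⟩
    have h2 : (univ.image t).card ≤ r := by
      refine Finset.card_image_le.trans ?_
      simpa using har i
    nlinarith
  · exact Nat.zero_le _

lemma auxBall_card {ι V : Type*} [Fintype ι] (ar : ι → ℕ) (r Δ : ℕ) (har : ∀ i, ar i ≤ r)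
    (R : ∀ i, Finset (Fin (ar i) → V)) (hd : ∀ x, degree ar R x ≤ Δ) (x : V) (l : ℕ) :
    (auxBall ar R x l).card ≤ (1 + r * Δ) ^ l := by
  induction l with
  | zero => simp [auxBall]
  | succ l ih =>
    rw [auxBall, pow_succ]
    refine (Finset.card_biUnion_le_card_mul _ _ _
      (fun y _ => auxNbr_card ar r Δ har R y (hd y))).trans ?_
    exact Nat.mul_le_mul_right _ ih

lemma auxBall_mono {ι V : Type*} [Fintype ι] (ar : ι → ℕ)
    (R : ∀ i, Finset (Fin (ar i) → V)) (x : V) {l l' : ℕ} (h : l ≤ l') :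
    auxBall ar R x l ⊆ auxBall ar R x l' := by
  induction h with
  | refl => exact Finset.Subset.refl _
  | step _ ih =>
    refine ih.trans fun y hy => ?_
    rw [auxBall, Finset.mem_biUnion]
    exact ⟨y, hy, by simp [auxNbr]⟩

lemma auxBall_step {ι V : Type*} [Fintype ι] (ar : ι → ℕ)
    (R : ∀ i, Finset (Fin (ar i) → V)) (x y z : V) (l : ℕ) (hy : y ∈ auxBall ar R x l)
    (i : ι) (t : Fin (ar i) → V) (ht : t ∈ R i) (h1 : ∃ j, t j = y) (h2 : ∃ j, t j = z) :
    z ∈ auxBall ar R x (l + 1) := by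
  rw [auxBall, Finset.mem_biUnion]
  refine ⟨y, hy, ?_⟩
  unfold auxNbr
  simp only [Finset.mem_insert, Finset.mem_biUnion, Finset.mem_filter, Finset.mem_image,
    Finset.mem_univ, true_and]
  exact Or.inr ⟨i, t, ⟨ht, h1⟩, h2⟩

lemma aux_sum_degree {ι V : Type*} [Fintype ι] [Fintype V] (ar : ι → ℕ)
    (R : ∀ i, Finset (Fin (ar i) → V)) :
    ∑ x, degree ar R x = ∑ i, ar i * (R i).card := by
  unfold degree
  rw [Finset.sum_comm]
  refine Finset.sum_congr rfl fun i _ => ?_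
  rw [Finset.sum_comm]
  have : ∀ t ∈ R i, ∑ x : V, (univ.filter fun j => t j = x).card = ar i := by
    intro t _
    rw [← Finset.card_eq_sum_card_fiberwise (f := t) (s := univ) (t := univ) (by simp)]
    simp
  rw [Finset.sum_congr rfl this]
  simp [mul_comm]

noncomputable def auxIns {ι V : Type*} (ar : ι → ℕ)
    (R : ∀ i, Finset (Fin (ar i) → V)) (i : ι) (t : Fin (ar i) → V) :
    ∀ i, Finset (Fin (ar i) → V) := Function.update R i (insert t (R i))

lemma auxIns_self {ι V : Type*} (ar : ι → ℕ)
    (R : ∀ i, Finset (Fin (ar i) → V)) (i : ι) (t : Fin (ar i) → V) :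
    auxIns ar R i t i = insert t (R i) := by simp [auxIns]

lemma auxIns_ne {ι V : Type*} (ar : ι → ℕ)
    (R : ∀ i, Finset (Fin (ar i) → V)) (i : ι) (t : Fin (ar i) → V) (i' : ι) (h : i' ≠ i) :
    auxIns ar R i t i' = R i' := by simp [auxIns, h]

lemma auxIns_mem {ι V : Type*} (ar : ι → ℕ)
    (R : ∀ i, Finset (Fin (ar i) → V)) (i : ι) (t : Fin (ar i) → V)
    (s : Σ i, Fin (ar i) → V) (h : s.2 ∈ auxIns ar R i t s.1) :
    s.2 ∈ R s.1 ∨ s = ⟨i, t⟩ := by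
  obtain ⟨i', u⟩ := s
  by_cases hi : i' = i
  · subst hi
    rw [auxIns_self] at h
    rcases Finset.mem_insert.1 h with h | h
    · right; simp only at h; rw [h]
    · exact Or.inl h
  · rw [auxIns_ne _ _ _ _ _ hi] at h
    exact Or.inl h

lemma auxIns_degree {ι V : Type*} [Fintype ι] (ar : ι → ℕ)
    (R : ∀ i, Finset (Fin (ar i) → V)) (i : ι) (t : Fin (ar i) → V)
    (Δ : ℕ) (hd : ∀ x, degree ar R x ≤ Δ) (hinj : Function.Injective t)
    (ht : ∀ j, degree ar R (t j) < Δ) (x : V) :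
    degree ar (auxIns ar R i t) x ≤ Δ := by
  have h1 : degree ar (auxIns ar R i t) x
      ≤ degree ar R x + (univ.filter fun j => t j = x).card := by
    have : ∀ i', ∑ u ∈ auxIns ar R i t i', (univ.filter fun j => u j = x).card
        ≤ ∑ u ∈ R i', (univ.filter fun j => u j = x).card
          + if i' = i then (univ.filter fun j => t j = x).card else 0 := by
      intro i'
      by_cases hi : i' = i
      · subst hi
        rw [auxIns_self]
        by_cases hm : t ∈ R i'
        · rw [Finset.insert_eq_of_mem hm]; exact Nat.le_add_right _ _
        · rw [Finset.sum_insert hm, if_pos rfl, add_comm]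
      · rw [auxIns_ne _ _ _ _ _ hi]; exact Nat.le_add_right _ _
    unfold degree
    refine (Finset.sum_le_sum fun i' _ => this i').trans ?_
    rw [Finset.sum_add_distrib, Finset.sum_ite_eq' univ i]
    simp
  by_cases hx : ∃ j, t j = x
  · obtain ⟨j, rfl⟩ := hx
    have : (univ.filter fun j' => t j' = t j).card ≤ 1 := by
      rw [Finset.card_le_one]
      intro p hp q hq
      simp only [Finset.mem_filter, Finset.mem_univ, true_and] at hp hq
      exact hinj (hp.trans hq.symm)
    have := ht j
    omega
  · have : (univ.filter fun j' => t j' = x) = ∅ := by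
      ext j; simp only [Finset.mem_filter, Finset.mem_univ, true_and]
      simp only [Finset.notMem_empty, iff_false]
      exact fun h => hx ⟨j, h⟩
    rw [this] at h1
    have := hd x
    simp at h1; omega

lemma auxIns_girth {ι V : Type*} [Fintype ι] (ar : ι → ℕ) (k : ℕ)
    (R : ∀ i, Finset (Fin (ar i) → V)) (i : ι) (t : Fin (ar i) → V)
    (hg : ∀ m, HasRelCycle ar R m → k ≤ m)
    (ht : ∀ j j', j ≠ j' → t j' ∉ auxBall ar R (t j) k) :
    ∀ m, HasRelCycle ar (auxIns ar R i t) m → k ≤ m := by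
  intro m hm
  rcases hm with ⟨rfl, i', u, hu, j, j', hj, hjj⟩ | ⟨x, s, hm2, hx, hs, hR, h1, h2⟩
  · rcases auxIns_mem ar R i t ⟨i', u⟩ hu with h | h
    · exact hg 1 (Or.inl ⟨rfl, i', u, h, j, j', hj, hjj⟩)
    · cases h
      exfalso
      refine ht j j' hj (auxBall_mono ar R _ (Nat.zero_le k) ?_)
      simp [auxBall, hjj]
  by_contra hlt
  push Not at hlt
  by_cases hp : ∃ p, s p = ⟨i, t⟩
  swap
  · push Not at hp
    exact absurd (hg m (Or.inr ⟨x, s, hm2, hx, hs,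
      fun p => (auxIns_mem ar R i t (s p) (hR p)).resolve_right (hp p), h1, h2⟩)) (by omega)
  obtain ⟨p, hp⟩ := hp
  have hm0 : 0 < m := by omega
  let q : ℕ → Fin m := fun l => ⟨((p : ℕ) + l) % m, Nat.mod_lt _ hm0⟩
  have hq0 : q 0 = p := by
    apply Fin.ext; simp [q, Nat.mod_eq_of_lt p.isLt]
  have hqm : q m = p := by
    apply Fin.ext; simp [q, Nat.mod_eq_of_lt p.isLt]
  have hqne : ∀ l, 0 < l → l < m → q l ≠ p := by
    intro l hl hlm h
    have h3 : ((p : ℕ) + l) % m = p := congrArg Fin.val h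
    have hpl := p.isLt
    by_cases hc : (p : ℕ) + l < m
    · rw [Nat.mod_eq_of_lt hc] at h3; omega
    · rw [Nat.mod_eq_sub_mod (by omega), Nat.mod_eq_of_lt (by omega)] at h3; omega
  have hnext : ∀ l, ∃ j, (s (q l)).2 j = x (q (l + 1)) := by
    intro l
    obtain ⟨j, hj⟩ := h2 (q l)
    refine ⟨j, hj.trans (congrArg x (Fin.ext ?_))⟩
    simp [q, Nat.add_assoc]
  have hpath : ∀ l, l + 1 ≤ m → x (q (l + 1)) ∈ auxBall ar R (x (q 1)) l := by
    intro l
    induction l with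
    | zero => intro _; simp [auxBall]
    | succ l ih =>
      intro hl
      refine auxBall_step ar R _ _ _ l (ih (by omega)) (s (q (l + 1))).1 (s (q (l + 1))).2 ?_
        (h1 _) (hnext (l + 1))
      refine (auxIns_mem ar R i t _ (hR _)).resolve_right fun h => ?_
      exact hqne (l + 1) (by omega) (by omega) (hs (h.trans hp.symm))
  have hend := hpath (m - 1) (by omega)
  rw [Nat.sub_add_cancel (by omega), hqm] at hend
  have ha := h1 p
  have hb := hnext 0
  rw [hq0] at hb
  simp only [zero_add] at hb
  rw [hp] at ha hb
  obtain ⟨j, hj⟩ := ha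
  obtain ⟨j', hj'⟩ := hb
  simp only at hj hj'
  refine ht j' j ?_ ?_
  · rintro rfl
    exact hqne 1 (by omega) (by omega) (hx (hj'.symm.trans hj))
  · rw [hj, hj']
    exact auxBall_mono ar R _ (by omega) hend

noncomputable def auxQ {V : Type*} [Fintype V] {a : ℕ} (T : Fin a → Finset V) : ℝ :=
  (∏ i, ((T i).card : ℝ)) / (Fintype.card V : ℝ) ^ a

noncomputable def auxSg (b : Bool) : ℝ := if b then 1 else -1

noncomputable def auxPot {V : Type*} [Fintype V] {a : ℕ} (l : ℝ) (R : Finset (Fin a → V)) : ℝ :=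
  ∑ κ : (Fin a → Finset V) × Bool,
    Real.exp (l * (auxSg κ.2 * (relCount R κ.1 - R.card * auxQ κ.1)))

lemma auxQ_nonneg {V : Type*} [Fintype V] {a : ℕ} (T : Fin a → Finset V) : 0 ≤ auxQ T := by
  unfold auxQ; positivity

lemma auxQ_le_one {V : Type*} [Fintype V] {a : ℕ} (T : Fin a → Finset V) : auxQ T ≤ 1 := by
  unfold auxQ
  refine div_le_one_of_le₀ ?_ (by positivity)
  calc ∏ i, ((T i).card : ℝ) ≤ ∏ _i : Fin a, (Fintype.card V : ℝ) :=
        Finset.prod_le_prod (fun _ _ => by positivity)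
          (fun i _ => by exact_mod_cast Finset.card_le_univ (T i))
    _ = _ := by simp

noncomputable def auxInd {V : Type*} {a : ℕ} (T : Fin a → Finset V) (t : Fin a → V) : ℝ :=
  if ∀ i, t i ∈ T i then 1 else 0

lemma aux_relCount_insert {V : Type*} {a : ℕ} (R : Finset (Fin a → V))
    (t : Fin a → V) (ht : t ∉ R) (T : Fin a → Finset V) :
    relCount (insert t R) T = relCount R T + auxInd T t := by
  unfold relCount auxInd
  rw [Finset.filter_insert]
  split_ifs with h
  · rw [Finset.card_insert_of_notMem (by simp [ht])]; push_cast; ring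
  · simp

lemma auxInd_sum {V : Type*} [Fintype V] [Nonempty V] {a : ℕ} (T : Fin a → Finset V) :
    ∑ t, (auxInd T t - auxQ T) = 0 := by
  have h1 : ∑ t, auxInd T t = ∏ i, ((T i).card : ℝ) := by
    unfold auxInd
    rw [Finset.sum_boole, ← Nat.cast_prod, ← Fintype.card_piFinset]
    congr 2
    ext t; simp
  have hV : (Fintype.card V : ℝ) ≠ 0 := by exact_mod_cast Fintype.card_ne_zero
  rw [Finset.sum_sub_distrib, h1]
  simp only [auxQ, Finset.sum_const, Finset.card_univ, Fintype.card_fun, Fintype.card_fin,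
    nsmul_eq_mul, Nat.cast_pow]
  field_simp
  simp

lemma aux_bad {ι V : Type*} [Fintype ι] [Fintype V] (ar : ι → ℕ) (r k Δ : ℕ)
    (har : ∀ i, ar i ≤ r) (R : ∀ i, Finset (Fin (ar i) → V))
    (hd : ∀ x, degree ar R x ≤ Δ) (i : ι) :
    Fintype.card V * ((univ.filter fun t : Fin (ar i) → V => (∀ j, degree ar R (t j) < Δ) ∧
        ∀ j j', j ≠ j' → t j' ∉ auxBall ar R (t j) k)ᶜ).card
      ≤ (r * (univ.filter fun x => Δ ≤ degree ar R x).card + r * (r * (1 + r * Δ) ^ k))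
        * Fintype.card V ^ (ar i) := by
  set n := Fintype.card V
  set sat := univ.filter fun x => Δ ≤ degree ar R x with hsat
  let B1 : Fin (ar i) → Finset (Fin (ar i) → V) := fun j =>
    univ.filter fun t => Δ ≤ degree ar R (t j)
  let B2 : Fin (ar i) → Fin (ar i) → Finset (Fin (ar i) → V) := fun j j' =>
    univ.filter fun t => j ≠ j' ∧ t j' ∈ auxBall ar R (t j) k
  have hB1 : ∀ j, n * (B1 j).card ≤ sat.card * n ^ ar i := by
    intro j
    refine aux_fiber j (fun t : Fin (ar i) → V => Δ ≤ degree ar R (t j)) _ fun t => ?_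
    simp [hsat]
  have hB2 : ∀ j j', n * (B2 j j').card ≤ (1 + r * Δ) ^ k * n ^ ar i := by
    intro j j'
    refine aux_fiber j' (fun t : Fin (ar i) → V => j ≠ j' ∧ t j' ∈ auxBall ar R (t j) k) _
      fun t => ?_
    by_cases hj : j = j'
    · simp [hj]
    · refine le_trans (Finset.card_le_card ?_) (auxBall_card ar r Δ har R hd (t j) k)
      intro y hy
      simpa [Function.update_of_ne hj, hj] using hy
  have hsub : ((univ.filter fun t : Fin (ar i) → V => (∀ j, degree ar R (t j) < Δ) ∧
        ∀ j j', j ≠ j' → t j' ∉ auxBall ar R (t j) k)ᶜ)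
      ⊆ (univ.biUnion B1) ∪ univ.biUnion fun j => univ.biUnion (B2 j) := by
    intro t ht
    simp only [Finset.mem_compl, Finset.mem_filter, Finset.mem_univ, true_and] at ht
    simp only [Finset.mem_union, Finset.mem_biUnion, Finset.mem_univ, true_and, B1, B2,
      Finset.mem_filter]
    by_contra hc
    push Not at hc
    exact ht hc
  have hc1 : n * (univ.biUnion B1).card ≤ r * (sat.card * n ^ ar i) := by
    refine (Nat.mul_le_mul_left n Finset.card_biUnion_le).trans ?_
    rw [Finset.mul_sum]
    refine (Finset.sum_le_sum fun j _ => hB1 j).trans ?_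
    simp only [Finset.sum_const, Finset.card_univ, Fintype.card_fin, smul_eq_mul]
    exact Nat.mul_le_mul_right _ (har i)
  have hc2 : n * (univ.biUnion fun j => univ.biUnion (B2 j)).card
      ≤ r * (r * ((1 + r * Δ) ^ k * n ^ ar i)) := by
    refine (Nat.mul_le_mul_left n Finset.card_biUnion_le).trans ?_
    rw [Finset.mul_sum]
    have : ∀ j ∈ (univ : Finset (Fin (ar i))), n * (univ.biUnion (B2 j)).card
        ≤ r * ((1 + r * Δ) ^ k * n ^ ar i) := by
      intro j _
      refine (Nat.mul_le_mul_left n Finset.card_biUnion_le).trans ?_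
      rw [Finset.mul_sum]
      refine (Finset.sum_le_sum fun j' _ => hB2 j j').trans ?_
      simp only [Finset.sum_const, Finset.card_univ, Fintype.card_fin, smul_eq_mul]
      exact Nat.mul_le_mul_right _ (har i)
    refine (Finset.sum_le_sum this).trans ?_
    simp only [Finset.sum_const, Finset.card_univ, Fintype.card_fin, smul_eq_mul]
    exact Nat.mul_le_mul_right _ (har i)
  calc _ ≤ n * ((univ.biUnion B1).card + (univ.biUnion fun j => univ.biUnion (B2 j)).card) :=
        Nat.mul_le_mul_left n ((Finset.card_le_card hsub).trans (Finset.card_union_le _ _))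
    _ ≤ _ := by
        rw [Nat.mul_add]
        refine (Nat.add_le_add hc1 hc2).trans (le_of_eq ?_)
        ring

def AuxGood {ι V : Type*} [Fintype ι] (ar : ι → ℕ) (k Δ : ℕ)
    (R : ∀ i, Finset (Fin (ar i) → V)) : Prop :=
  (∀ m, HasRelCycle ar R m → k ≤ m) ∧ ∀ x, degree ar R x ≤ Δ

lemma aux_allowed {ι V : Type*} [Fintype ι] [Fintype V] [Nonempty V] (ar : ι → ℕ)
    (r k Δ M : ℕ) (hΔ : 0 < Δ)
    (har : ∀ i, ar i ≤ r) (R : ∀ i, Finset (Fin (ar i) → V))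
    (hd : ∀ x, degree ar R x ≤ Δ) (hM : ∀ i, (R i).card ≤ M) (i : ι) (δ : ℝ)
    (h1 : (2 * r * (r * Fintype.card ι * M) : ℝ) ≤ δ * Fintype.card V * Δ)
    (h2 : (2 * r * r * (1 + r * Δ) ^ k : ℝ) ≤ δ * Fintype.card V) :
    (((univ.filter fun t : Fin (ar i) → V => (∀ j, degree ar R (t j) < Δ) ∧
        ∀ j j', j ≠ j' → t j' ∉ auxBall ar R (t j) k)ᶜ).card : ℝ)
      ≤ δ * Fintype.card (Fin (ar i) → V) := by
  have hn : (0 : ℝ) < Fintype.card V := by exact_mod_cast Fintype.card_pos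
  have hΔ' : (0 : ℝ) < Δ := by exact_mod_cast hΔ
  have hbad := aux_bad ar r k Δ har R hd i
  set sat := univ.filter fun x => Δ ≤ degree ar R x with hsat
  set A := (univ.filter fun t : Fin (ar i) → V => (∀ j, degree ar R (t j) < Δ) ∧
        ∀ j j', j ≠ j' → t j' ∉ auxBall ar R (t j) k) with hA
  have hs1 : sat.card * Δ ≤ r * Fintype.card ι * M := by
    calc sat.card * Δ = ∑ x ∈ sat, Δ := by simp
      _ ≤ ∑ x ∈ sat, degree ar R x := Finset.sum_le_sum fun x hx => by
          simpa [hsat] using hx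
      _ ≤ ∑ x, degree ar R x := Finset.sum_le_sum_of_subset (Finset.subset_univ _)
      _ = ∑ i, ar i * (R i).card := aux_sum_degree ar R
      _ ≤ ∑ _i : ι, r * M := Finset.sum_le_sum fun i _ => Nat.mul_le_mul (har i) (hM i)
      _ = _ := by simp; ring
  have hs2 : (2 * r * sat.card : ℝ) ≤ δ * Fintype.card V := by
    have h3 : (sat.card * Δ : ℝ) ≤ r * Fintype.card ι * M := by exact_mod_cast hs1
    have h4 : (2 * r * sat.card : ℝ) * Δ ≤ δ * Fintype.card V * Δ := by
      refine le_trans ?_ h1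
      have := mul_le_mul_of_nonneg_left h3 (by positivity : (0 : ℝ) ≤ 2 * r)
      linarith
    exact le_of_mul_le_mul_right h4 hΔ'
  have hAc : ((Aᶜ).card : ℝ) ≤ δ * Fintype.card (Fin (ar i) → V) := by
    have h3 : (Fintype.card V * (Aᶜ).card : ℝ)
        ≤ (r * sat.card + r * (r * (1 + r * Δ) ^ k)) * Fintype.card V ^ (ar i) := by
      exact_mod_cast hbad
    have h4 : (Fintype.card V * (Aᶜ).card : ℝ)
        ≤ Fintype.card V * (δ * Fintype.card V ^ (ar i)) := by
      refine h3.trans ?_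
      have h6 : (r * sat.card + r * (r * (1 + r * Δ) ^ k) : ℝ) ≤ Fintype.card V * δ := by
        linarith
      calc _ ≤ (Fintype.card V * δ) * (Fintype.card V : ℝ) ^ (ar i) :=
            mul_le_mul_of_nonneg_right h6 (by positivity)
        _ = _ := by ring
    have h5 := le_of_mul_le_mul_left h4 hn
    simpa using h5
  exact hAc

lemma aux_pot {V : Type*} [Fintype V] [Nonempty V] {a : ℕ} (R A : Finset (Fin a → V))
    (δ l : ℝ) (hl : 0 < l) (hl1 : l ≤ 1) (hδ1 : δ ≤ 1 / 2)
    (hAc : ((Aᶜ).card : ℝ) ≤ δ * Fintype.card (Fin a → V)) :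
    ∃ t ∈ A, t ∉ R → auxPot l (insert t R) ≤ (1 + l ^ 2 + 2 * δ * l) * auxPot l R := by
  obtain ⟨t, htA, ht⟩ := aux_step
    (fun (κ : (Fin a → Finset V) × Bool) t => auxSg κ.2 * (auxInd κ.1 t - auxQ κ.1))
    (by
      intro κ t
      have h3 := auxQ_nonneg κ.1
      have h4 := auxQ_le_one κ.1
      have h5 : |auxSg κ.2| = 1 := by unfold auxSg; split_ifs <;> simp
      rw [abs_mul, h5, one_mul]
      unfold auxInd
      split_ifs <;> rw [abs_le] <;> constructor <;> linarith)
    (by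
      intro κ
      rw [← Finset.mul_sum, auxInd_sum, mul_zero])
    (fun κ => Real.exp (l * (auxSg κ.2 * (relCount R κ.1 - R.card * auxQ κ.1))))
    (fun κ => (Real.exp_pos _).le) A δ l hl hl1 hδ1 hAc
  refine ⟨t, htA, fun htR => ?_⟩
  refine le_trans (le_of_eq ?_) ht
  unfold auxPot
  refine Finset.sum_congr rfl fun κ _ => ?_
  rw [← Real.exp_add, aux_relCount_insert _ _ htR, Finset.card_insert_of_notMem htR]
  congr 1
  push_cast
  ring

lemma aux_add {ι V : Type*} [Fintype ι] [Fintype V] [Nonempty V] (ar : ι → ℕ) (r k Δ M : ℕ)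
    (hk : 0 < k) (hΔ : 0 < Δ)
    (har : ∀ i, ar i ≤ r) (R : ∀ i, Finset (Fin (ar i) → V))
    (hR : AuxGood ar k Δ R) (hM : ∀ i, (R i).card ≤ M) (i : ι) (hi : 2 ≤ ar i)
    (δ l : ℝ) (hl : 0 < l) (hl1 : l ≤ 1) (hδ1 : δ ≤ 1 / 2)
    (h1 : (2 * r * (r * Fintype.card ι * M) : ℝ) ≤ δ * Fintype.card V * Δ)
    (h2 : (2 * r * r * (1 + r * Δ) ^ k : ℝ) ≤ δ * Fintype.card V) :
    ∃ t, t ∉ R i ∧ AuxGood ar k Δ (auxIns ar R i t) ∧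
      auxPot l (insert t (R i)) ≤ (1 + l ^ 2 + 2 * δ * l) * auxPot l (R i) := by
  obtain ⟨hg, hd⟩ := hR
  have hAc := aux_allowed ar r k Δ M hΔ har R hd hM i δ h1 h2
  generalize hA : (univ.filter fun t : Fin (ar i) → V => (∀ j, degree ar R (t j) < Δ) ∧
        ∀ j j', j ≠ j' → t j' ∉ auxBall ar R (t j) k) = A at hAc
  obtain ⟨t, htA, ht⟩ := aux_pot (R i) A δ l hl hl1 hδ1 hAc
  simp only [← hA, Finset.mem_filter, Finset.mem_univ, true_and] at htA
  obtain ⟨ht1, ht2⟩ := htA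
  have hinj : Function.Injective t := by
    intro j j' hjj
    by_contra hne
    refine ht2 j j' hne (auxBall_mono ar R _ (Nat.zero_le k) ?_)
    simp [auxBall, hjj]
  have htR : t ∉ R i := by
    intro hmem
    refine ht2 ⟨0, by omega⟩ ⟨1, by omega⟩ (by simp) (auxBall_mono ar R _ hk ?_)
    exact auxBall_step ar R _ (t ⟨0, by omega⟩) _ 0 (by simp [auxBall]) i t hmem ⟨_, rfl⟩ ⟨_, rfl⟩
  refine ⟨t, htR, ⟨auxIns_girth ar k R i t hg ht2, auxIns_degree ar R i t Δ hd hinj ht1⟩, ht htR⟩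

lemma aux_fill {ι V : Type*} [Fintype ι] [Fintype V] [Nonempty V] (ar : ι → ℕ) (r k Δ M : ℕ)
    (hk : 0 < k) (hΔ : 0 < Δ)
    (har : ∀ i, ar i ≤ r) (R : ∀ i, Finset (Fin (ar i) → V))
    (hR : AuxGood ar k Δ R) (hM : ∀ i, (R i).card ≤ M) (i : ι) (hi : 2 ≤ ar i)
    (hRi : R i = ∅)
    (δ l : ℝ) (hl : 0 < l) (hl1 : l ≤ 1) (hδ0 : 0 < δ) (hδ1 : δ ≤ 1 / 2)
    (h1 : (2 * r * (r * Fintype.card ι * M) : ℝ) ≤ δ * Fintype.card V * Δ)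
    (h2 : (2 * r * r * (1 + r * Δ) ^ k : ℝ) ≤ δ * Fintype.card V) (c : ℕ) (hc : c ≤ M) :
    ∃ R' : ∀ i, Finset (Fin (ar i) → V), AuxGood ar k Δ R' ∧ (∀ i', i' ≠ i → R' i' = R i') ∧
      (R' i).card = c ∧ auxPot l (R' i)
        ≤ (1 + l ^ 2 + 2 * δ * l) ^ c * auxPot l (∅ : Finset (Fin (ar i) → V)) := by
  induction c with
  | zero => exact ⟨R, hR, fun _ _ => rfl, by simp [hRi], by simp [hRi]⟩
  | succ c ih =>
    obtain ⟨R', hg, hne, hcard, hp⟩ := ih (by omega)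
    obtain ⟨t, ht, hg', hp'⟩ := aux_add ar r k Δ M hk hΔ har R' hg (by
      intro i'
      by_cases h : i' = i
      · subst h; omega
      · rw [hne _ h]; exact hM i') i hi δ l hl hl1 hδ1 h1 h2
    refine ⟨auxIns ar R' i t, hg', fun i' h => (auxIns_ne ar R' i t i' h).trans (hne i' h), ?_, ?_⟩
    · rw [auxIns_self, Finset.card_insert_of_notMem ht, hcard]
    · rw [auxIns_self, pow_succ]
      refine hp'.trans ?_
      have h6 : (0 : ℝ) ≤ 1 + l ^ 2 + 2 * δ * l := by positivity
      calc _ ≤ (1 + l ^ 2 + 2 * δ * l) * ((1 + l ^ 2 + 2 * δ * l) ^ c *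
            auxPot l (∅ : Finset (Fin (ar i) → V))) := mul_le_mul_of_nonneg_left hp h6
        _ = _ := by ring

lemma aux_all {ι V : Type*} [Fintype ι] [Fintype V] [Nonempty V] (ar : ι → ℕ) (r k Δ M : ℕ)
    (hk : 0 < k) (hΔ : 0 < Δ)
    (har : ∀ i, ar i ≤ r)
    (δ l : ℝ) (hl : 0 < l) (hl1 : l ≤ 1) (hδ0 : 0 < δ) (hδ1 : δ ≤ 1 / 2)
    (h1 : (2 * r * (r * Fintype.card ι * M) : ℝ) ≤ δ * Fintype.card V * Δ)
    (h2 : (2 * r * r * (1 + r * Δ) ^ k : ℝ) ≤ δ * Fintype.card V) (s : Finset ι) :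
    ∃ R : ∀ i, Finset (Fin (ar i) → V), AuxGood ar k Δ R ∧ (∀ i, (R i).card ≤ M) ∧
      (∀ i, i ∉ s → R i = ∅) ∧ ∀ i ∈ s, 2 ≤ ar i →
      (R i).card = M ∧ auxPot l (R i)
        ≤ (1 + l ^ 2 + 2 * δ * l) ^ M * auxPot l (∅ : Finset (Fin (ar i) → V)) := by
  induction s using Finset.induction_on with
  | empty =>
    refine ⟨fun _ => ∅, ⟨?_, ?_⟩, by simp, by simp, by simp⟩
    · rintro m (⟨_, i, t, ht, _⟩ | ⟨x, s, hm, _, _, h, _⟩)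
      · simp at ht
      · exact absurd (h ⟨0, by omega⟩) (by simp)
    · intro x; simp [degree]
  | insert i s hi ih =>
    obtain ⟨R, hg, hM, h0, hs⟩ := ih
    by_cases ha : 2 ≤ ar i
    · obtain ⟨R', hg', hne, hc, hp⟩ := aux_fill ar r k Δ M hk hΔ har R hg hM i ha (h0 i hi)
        δ l hl hl1 hδ0 hδ1 h1 h2 M le_rfl
      refine ⟨R', hg', ?_, ?_, ?_⟩
      · intro i'
        by_cases h : i' = i
        · subst h; omega
        · rw [hne _ h]; exact hM i'
      · intro i' h
        rw [Finset.mem_insert, not_or] at h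
        rw [hne _ h.1]; exact h0 _ h.2
      · intro i' h ha'
        by_cases h' : i' = i
        · subst h'; exact ⟨hc, hp⟩
        · rw [hne _ h']
          exact hs i' ((Finset.mem_insert.1 h).resolve_left h') ha'
    · refine ⟨R, hg, hM, fun i' h => h0 i' fun h' => h (Finset.mem_insert_of_mem h'), ?_⟩
      intro i' h ha'
      rcases Finset.mem_insert.1 h with rfl | h
      · exact absurd ha' ha
      · exact hs i' h ha'

lemma auxPot_empty {V : Type*} [Fintype V] {a : ℕ} (l : ℝ) :
    auxPot l (∅ : Finset (Fin a → V)) = 2 ^ (Fintype.card V * a + 1) := by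
  unfold auxPot relCount
  simp [pow_succ, pow_mul]

lemma aux_final {V : Type*} [Fintype V] {a M : ℕ} (l δ ε : ℝ) (hl : 0 < l) (hδ : 0 < δ)
    (R : Finset (Fin a → V)) (hc : R.card = M)
    (hp : auxPot l R ≤ (1 + l ^ 2 + 2 * δ * l) ^ M * auxPot l (∅ : Finset (Fin a → V)))
    (hM : (Fintype.card V * a + 1 : ℝ) + M * (l ^ 2 + 2 * δ * l) < l * (ε * M)) :
    IsExpanderRel ε R := by
  intro T
  have key : ∀ b, auxSg b * (relCount R T - R.card * auxQ T) < ε * M := by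
    intro b
    have h1 : Real.exp (l * (auxSg b * (relCount R T - R.card * auxQ T))) ≤ auxPot l R := by
      unfold auxPot
      exact Finset.single_le_sum (f := fun κ : (Fin a → Finset V) × Bool =>
        Real.exp (l * (auxSg κ.2 * (relCount R κ.1 - R.card * auxQ κ.1))))
        (fun κ _ => (Real.exp_pos _).le) (Finset.mem_univ (T, b))
    have h2 : (1 + l ^ 2 + 2 * δ * l) ^ M ≤ Real.exp (M * (l ^ 2 + 2 * δ * l)) := by
      rw [Real.exp_nat_mul]
      refine pow_le_pow_left₀ (by positivity) ?_ M
      linarith [Real.add_one_le_exp (l ^ 2 + 2 * δ * l)]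
    have h3 : (2 : ℝ) ^ (Fintype.card V * a + 1) ≤ Real.exp (Fintype.card V * a + 1) := by
      have h := Real.exp_nat_mul 1 (Fintype.card V * a + 1)
      push_cast at h
      rw [mul_one] at h
      rw [h]
      refine pow_le_pow_left₀ (by norm_num) ?_ _
      linarith [Real.add_one_le_exp 1]
    have h4 := h1.trans hp
    rw [auxPot_empty] at h4
    have h5 := h4.trans (mul_le_mul h2 h3 (by positivity) (Real.exp_pos _).le)
    rw [← Real.exp_add, Real.exp_le_exp] at h5
    exact lt_of_mul_lt_mul_left (by linarith) hl.le
  rw [mul_div_assoc]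
  change |relCount R T - R.card * auxQ T| < _
  rw [hc] at key ⊢
  have ht := key true
  have hf := key false
  simp only [auxSg] at ht hf
  rw [abs_lt]
  constructor
  · simp at hf; linarith
  · simp at ht; linarith

/-- Lemma (random): for a finite relational type with all symbols at most `r`-ary, a girth
bound `k` and `ε > 0`, there is a degree bound `Δ` such that for all sufficiently large `n`
there is a relational structure on `n` elements with girth at least `k`, maximal degree at
most `Δ`, all of whose relations of arity at least `2` are ε-expander relations. -/
theorem exists_large_girth_expander_structure
    {ι : Type*} [Fintype ι] (ar : ι → ℕ) (r k : ℕ) (hk : 0 < k)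
    (har : ∀ i, ar i ≤ r) (ε : ℝ) (hε : 0 < ε) :
    ∃ Δ : ℕ, 0 < Δ ∧ ∃ N : ℕ, ∀ n, N ≤ n →
      ∃ R : ∀ i, Finset (Fin (ar i) → Fin n),
        (∀ m, HasRelCycle ar R m → k ≤ m) ∧
        maxDegree ar R ≤ Δ ∧
        ∀ i, 2 ≤ ar i → IsExpanderRel ε (R i) := by
  classical
  obtain ⟨l, hl, hl1, hlε⟩ : ∃ l : ℝ, 0 < l ∧ l ≤ 1 ∧ l ≤ ε / 4 :=
    ⟨min 1 (ε / 4), by positivity, min_le_left _ _, min_le_right _ _⟩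
  obtain ⟨δ, hδ, hδ1, hδε⟩ : ∃ l : ℝ, 0 < l ∧ l ≤ 1 / 2 ∧ l ≤ ε / 8 :=
    ⟨min (1 / 2) (ε / 8), by positivity, min_le_left _ _, min_le_right _ _⟩
  obtain ⟨D, hD⟩ := exists_nat_gt (2 * (r + 1) / (l * ε))
  rw [div_lt_iff₀ (by positivity)] at hD
  obtain ⟨Δ, hΔ⟩ := exists_nat_gt (2 * r * (r * Fintype.card ι * D) / δ)
  rw [div_lt_iff₀ hδ] at hΔ
  have hΔ0 : 0 < Δ := by
    rcases Nat.eq_zero_or_pos Δ with h | h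
    · subst h
      have : (0 : ℝ) ≤ 2 * r * (r * Fintype.card ι * D) := by positivity
      simp at hΔ; linarith
    · exact h
  obtain ⟨N, hN⟩ := exists_nat_gt (2 * r * r * (1 + r * Δ) ^ k / δ)
  rw [div_lt_iff₀ hδ] at hN
  refine ⟨Δ, hΔ0, N + 1, fun n hn => ?_⟩
  have : Nonempty (Fin n) := ⟨⟨0, by omega⟩⟩
  have hn1 : (N : ℝ) + 1 ≤ n := by exact_mod_cast hn
  have hN0 : (0 : ℝ) ≤ N := by positivity
  obtain ⟨R, hg, -, -, hR⟩ := aux_all (V := Fin n) ar r k Δ (D * n) hk hΔ0 har δ l hl hl1 hδ hδ1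
    (by
      rw [Fintype.card_fin]; push_cast
      have := mul_le_mul_of_nonneg_right hΔ.le (by positivity : (0 : ℝ) ≤ n)
      linarith)
    (by
      rw [Fintype.card_fin]
      have := mul_le_mul_of_nonneg_left (show (N : ℝ) ≤ n by linarith) hδ.le
      linarith) univ
  refine ⟨R, hg.1, Finset.sup_le fun x _ => hg.2 x, fun i hi => ?_⟩
  obtain ⟨hc, hp⟩ := hR i (Finset.mem_univ i) hi
  refine aux_final l δ ε hl hδ (R i) hc hp ?_
  rw [Fintype.card_fin]; push_cast
  have hri : (ar i : ℝ) ≤ r := by exact_mod_cast har i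
  have e1 : l ^ 2 + 2 * δ * l ≤ l * ε / 2 := by nlinarith
  have e2 : (D * n : ℝ) * (l ^ 2 + 2 * δ * l) ≤ D * n * (l * ε / 2) :=
    mul_le_mul_of_nonneg_left e1 (by positivity)
  have e3 : (n : ℝ) * ar i ≤ n * r := mul_le_mul_of_nonneg_left hri (by positivity)
  have e4 := mul_lt_mul_of_pos_right hD (show (0 : ℝ) < n by linarith)
  linarith
end
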